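/- In the critical-execution setting (a recoverable wait-free binary consensus algorithm for the n processes, a configuration C, an integer z ≥ 1, and α ∈ 𝓔*_z(C) critical with respect to 𝓔*_z(C)), there is at least one process on team 0 in Cα and at least one process on team 1 in Cα. -/

import Mathlib

/-!
Since `α` is bivalent, each value `v` is still reachable after some single event following `α`.
If that event is a step `p_j`, then `α p_j`, being univalent, is `v`-univalent.  If it is a crash
`c_i`, take any `j ≠ i`: the events `c_i` and `p_j` commute, so `α c_i p_j` and `α p_j c_i` lead to
the same configuration, in which `p_i` is in its initial state and therefore decides some `w` when
it runs alone.  As `α c_i` is `v`-univalent, `w = v`, and so `v` is reachable from `α p_j` as well.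
-/

namespace RecoverableConsensus

/-- A deterministic object type: a set of values, operations and responses together with a
transition function assigning to each (value, operation) pair a unique response and a unique
resulting value. -/
structure DetType : Type 1 where
  Value : Type
  Op : Type
  Resp : Type
  δ : Value → Op → Resp × Value

/-- A type is readable if it has a Read operation that returns (an injective encoding of)
the current value of the object without changing it. -/
def Readable (T : DetType) : Prop :=
  ∃ (read : T.Op) (ι : T.Value → T.Resp),
    Function.Injective ι ∧ ∀ v, T.δ v read = (ι v, v)

/-- The register type over the value set `V`: the operation `none` is Read (returning the
current value without changing it) and `some v` is Write(v) (changing the value to `v`). -/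
def RegisterType (V : Type) : DetType where
  Value := V
  Op := Option V
  Resp := V
  δ := fun u op =>
    match op with
    | none => (u, u)
    | some v => (v, v)

def IsRegister (T : DetType) : Prop := ∃ V : Type, T = RegisterType V

/-- An event is either a step by a process or a crash of a process. -/
inductive Event (n : ℕ) : Type where
  | step : Fin n → Event n
  | crash : Fin n → Event n
deriving DecidableEq

/-- An algorithm for `n` processes: a collection of shared objects, each with a deterministic
type and an initial value, and for each process a deterministic state machine with an initial
state depending on the process's binary input.  Each state determines the process's next step
(`pending`: an operation applied to a designated object, or `none` for a no-op); the state
reached after a step is determined by the current state and the response received (`next`).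
`output i s = some v` means that `s` is an output state of process `i` for the value `v`;
processes in output states take only no-op steps. -/
structure Algorithm (n : ℕ) : Type 1 where
  ObjIdx : Type
  objType : ObjIdx → DetType
  objInit : (o : ObjIdx) → (objType o).Value
  PState : Fin n → Type
  init : (i : Fin n) → Bool → PState i
  pending : (i : Fin n) → PState i → Option ((o : ObjIdx) × (objType o).Op)
  next : (i : Fin n) → PState i → (o : ObjIdx) → (objType o).Resp → PState i
  output : (i : Fin n) → PState i → Option Bool
  output_noop : ∀ i s, output i s ≠ none → pending i s = none

/-- A configuration assigns a state to each process and a value to each object. -/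
structure Config {n : ℕ} (A : Algorithm n) : Type where
  pstate : (i : Fin n) → A.PState i
  oval : (o : A.ObjIdx) → (A.objType o).Value

variable {n : ℕ}

/-- The effect of one event on a configuration.  A crash of `p_i` resets `p_i` to its initial
state (for its input) and leaves all object values unchanged; a step of `p_i` applies its
pending operation (if any) to the designated object, receiving the response determined by the
type's transition function. -/
noncomputable def applyEvent (A : Algorithm n) (input : Fin n → Bool) (C : Config A) :
    Event n → Config A
  | .crash i => { C with pstate := Function.update C.pstate i (A.init i (input i)) }
  | .step i =>
    letI : DecidableEq A.ObjIdx := Classical.decEq _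
    match A.pending i (C.pstate i) with
    | none => C
    | some ⟨o, op⟩ =>
      { pstate := Function.update C.pstate i
          (A.next i (C.pstate i) o ((A.objType o).δ (C.oval o) op).1),
        oval := Function.update C.oval o ((A.objType o).δ (C.oval o) op).2 }

/-- Since the algorithm is deterministic, a finite execution from `C` is determined by its
schedule, i.e. its list of events; `run A input C σ` is the configuration `Cσ` reached by
applying the events of `σ` in order from `C`. -/
noncomputable def run (A : Algorithm n) (input : Fin n → Bool) (C : Config A) :
    List (Event n) → Config A
  | [] => C
  | e :: σ => run A input (applyEvent A input C e) σ

/-- The initial configuration: every process in its initial state, every object at its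
initial value. -/
def initConfig (A : Algorithm n) (input : Fin n → Bool) : Config A :=
  ⟨fun i => A.init i (input i), A.objInit⟩

/-- Process `i` has decided `v` in `Cσ`: at some point along the execution `σ` from `C`,
process `i` was in an output state for `v`. -/
def HasDecided (A : Algorithm n) (input : Fin n → Bool) (C : Config A)
    (σ : List (Event n)) (i : Fin n) (v : Bool) : Prop :=
  ∃ τ, τ <+: σ ∧ A.output i ((run A input C τ).pstate i) = some v

def CrashFree (σ : List (Event n)) : Prop := ∀ i : Fin n, Event.crash i ∉ σ

/-- The first `k` events of an infinite execution. -/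
def initSeg (e : ℕ → Event n) (k : ℕ) : List (Event n) := (List.range k).map e

/-- Agreement: in every execution no two processes decide different values. -/
def Agreement (A : Algorithm n) : Prop :=
  ∀ (input : Fin n → Bool) (σ : List (Event n)) (i j : Fin n) (v w : Bool),
    HasDecided A input (initConfig A input) σ i v →
    HasDecided A input (initConfig A input) σ j w → v = w

/-- Validity: every decided value is the input of some process. -/
def Validity (A : Algorithm n) : Prop :=
  ∀ (input : Fin n → Bool) (σ : List (Event n)) (i : Fin n) (v : Bool),
    HasDecided A input (initConfig A input) σ i v → ∃ j, input j = v

/-- Recoverable wait-freedom: every process, starting from its initial state, either crashes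
or decides within a finite number of its own steps.  Equivalently: in every infinite execution
in which process `i` starts at (or is reset by a crash to) its initial state, takes infinitely
many steps and crashes only finitely often, it eventually reaches an output state. -/
def RecWaitFree (A : Algorithm n) : Prop :=
  ∀ (input : Fin n → Bool) (C : Config A) (e : ℕ → Event n) (i : Fin n),
    (C.pstate i = A.init i (input i) ∨ ∃ k, e k = Event.crash i) →
    (∀ m, ∃ k, m ≤ k ∧ e k = Event.step i) →
    (∃ m, ∀ k, m ≤ k → e k ≠ Event.crash i) →
    ∃ (k : ℕ) (v : Bool), A.output i ((run A input C (initSeg e k)).pstate i) = some v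

/-- A recoverable wait-free binary consensus algorithm. -/
def SolvesRecConsensus (A : Algorithm n) : Prop :=
  Agreement A ∧ Validity A ∧ RecWaitFree A

/-- Agreement restricted to crash-free executions. -/
def AgreementCF (A : Algorithm n) : Prop :=
  ∀ (input : Fin n → Bool) (σ : List (Event n)), CrashFree σ →
    ∀ (i j : Fin n) (v w : Bool),
      HasDecided A input (initConfig A input) σ i v →
      HasDecided A input (initConfig A input) σ j w → v = w

/-- Validity restricted to crash-free executions. -/
def ValidityCF (A : Algorithm n) : Prop :=
  ∀ (input : Fin n → Bool) (σ : List (Event n)), CrashFree σ →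
    ∀ (i : Fin n) (v : Bool),
      HasDecided A input (initConfig A input) σ i v → ∃ j, input j = v

/-- Wait-freedom: in crash-free executions, every process that takes infinitely many steps
decides. -/
def WaitFree (A : Algorithm n) : Prop :=
  ∀ (input : Fin n → Bool) (e : ℕ → Event n),
    (∀ (k : ℕ) (i : Fin n), e k ≠ Event.crash i) →
    ∀ i : Fin n, (∀ m, ∃ k, m ≤ k ∧ e k = Event.step i) →
    ∃ (k : ℕ) (v : Bool),
      A.output i ((run A input (initConfig A input) (initSeg e k)).pstate i) = some v

/-- A wait-free binary consensus algorithm (for the model in which crashes are permanent,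
i.e. only crash-free executions are relevant). -/
def SolvesWFConsensus (A : Algorithm n) : Prop :=
  AgreementCF A ∧ ValidityCF A ∧ WaitFree A

/-- The number of crashes of process `i` in `σ`. -/
def crashCount (i : Fin n) (σ : List (Event n)) : ℕ :=
  (σ.filter fun e => decide (e = Event.crash i)).length

def isStepBelow (i : Fin n) : Event n → Bool
  | .step j => decide (j < i)
  | .crash _ => false

/-- The total number of steps taken by processes `p_0, …, p_{i-1}` in `σ`. -/
def stepsBelow (i : Fin n) (σ : List (Event n)) : ℕ := (σ.filter (isStepBelow i)).length

/-- The crash bound: for every process `p_i`, the number of crashes of `p_i` is at most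
`z·n` times the total number of steps of `p_0, …, p_{i-1}` (for `i = 0` this says that `p_0`
never crashes). -/
def EMem (z : ℕ) (σ : List (Event n)) : Prop :=
  ∀ i : Fin n, crashCount i σ ≤ z * n * stepsBelow i σ

/-- `𝓔_z`: executions satisfying the crash bound. -/
def ESet (n z : ℕ) : Set (List (Event n)) := { σ | EMem z σ }

/-- `𝓔*_z`: executions satisfying the crash bound in every prefix. -/
def EStarSet (n z : ℕ) : Set (List (Event n)) := { σ | ∀ τ, τ <+: σ → EMem z τ }

/-- `e` is an event by a process in `P`. -/
def eventBy (P : Set (Fin n)) : Event n → Prop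
  | .step i => i ∈ P
  | .crash i => i ∈ P

/-- The set of processes `P` is `v`-univalent in the execution `α` from `C` with respect to
the set of executions `𝒜`. -/
def VUnivalentIn (A : Algorithm n) (input : Fin n → Bool) (C : Config A)
    (𝒜 : Set (List (Event n))) (P : Set (Fin n)) (α : List (Event n)) (v : Bool) : Prop :=
  α ∈ 𝒜 ∧ ∀ β : List (Event n), (∀ e ∈ β, eventBy P e) → (α ++ β) ∈ 𝒜 →
    ∀ (i : Fin n) (w : Bool), HasDecided A input C (α ++ β) i w → w = v

/-- The set of processes `P` is bivalent in the execution `α` from `C` with respect to `𝒜`. -/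
def BivalentIn (A : Algorithm n) (input : Fin n → Bool) (C : Config A)
    (𝒜 : Set (List (Event n))) (P : Set (Fin n)) (α : List (Event n)) : Prop :=
  ∀ v : Bool, ∃ β : List (Event n), (∀ e ∈ β, eventBy P e) ∧ (α ++ β) ∈ 𝒜 ∧
    ∃ i : Fin n, HasDecided A input C (α ++ β) i v

/-- `P` is univalent in `α` with respect to `𝒜`: `v`-univalent for some `v`. -/
def UnivalentIn (A : Algorithm n) (input : Fin n → Bool) (C : Config A)
    (𝒜 : Set (List (Event n))) (P : Set (Fin n)) (α : List (Event n)) : Prop :=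
  ∃ v : Bool, VUnivalentIn A input C 𝒜 P α v

/-- `α ∈ 𝒜` is critical with respect to `𝒜`: `α` is bivalent with respect to `𝒜` and every
nonempty extension of `α` inside `𝒜` is univalent with respect to `𝒜`. -/
def Critical (A : Algorithm n) (input : Fin n → Bool) (C : Config A)
    (𝒜 : Set (List (Event n))) (α : List (Event n)) : Prop :=
  α ∈ 𝒜 ∧ BivalentIn A input C 𝒜 Set.univ α ∧
  ∀ β : List (Event n), β ≠ [] → (α ++ β) ∈ 𝒜 → UnivalentIn A input C 𝒜 Set.univ (α ++ β)

/-- Process `i` is on team `v` in `Cα` (with respect to `𝒜`): `α p_i` is `v`-univalent. -/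
def OnTeam (A : Algorithm n) (input : Fin n → Bool) (C : Config A)
    (𝒜 : Set (List (Event n))) (α : List (Event n)) (i : Fin n) (v : Bool) : Prop :=
  VUnivalentIn A input C 𝒜 Set.univ (α ++ [Event.step i]) v

/-- Process `i` is poised to apply an operation to object `O` in configuration `C`. -/
def PoisedAt (A : Algorithm n) (C : Config A) (i : Fin n) (O : A.ObjIdx) : Prop :=
  ∃ op, A.pending i (C.pstate i) = some ⟨O, op⟩

/-- `σ ∈ 𝒮(P)`: a crash-free schedule in which each process of `P` takes at most one step
and no other process takes a step. -/
def IsSched (P : Set (Fin n)) (σ : List (Event n)) : Prop :=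
  ∃ l : List (Fin n), l.Nodup ∧ (∀ j ∈ l, j ∈ P) ∧ σ = l.map Event.step

/-- The schedule `λ_k = c_k c_{k+1} ⋯ c_{n-1}`. -/
def lambdaSched (n k : ℕ) : List (Event n) :=
  ((List.finRange n).filter fun j => decide (k ≤ j.val)).map Event.crash

/-- `U_v`: the set of values of object `O` reachable from `Dα` by a schedule in `𝒮(𝒫)`
whose first process is on team `v`. -/
def USetCfg (A : Algorithm n) (input : Fin n → Bool) (D : Config A)
    (𝒜 : Set (List (Event n))) (α : List (Event n)) (O : A.ObjIdx) (v : Bool) :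
    Set (A.objType O).Value :=
  { w | ∃ (j : Fin n) (σ : List (Event n)), OnTeam A input D 𝒜 α j v ∧
        IsSched {k : Fin n | k ≠ j} σ ∧
        w = (run A input D (α ++ Event.step j :: σ)).oval O }

/-- The configuration `Dα` is `v`-hiding. -/
def VHiding (A : Algorithm n) (input : Fin n → Bool) (D : Config A)
    (𝒜 : Set (List (Event n))) (α : List (Event n)) (O : A.ObjIdx) (v : Bool) : Prop :=
  USetCfg A input D 𝒜 α O false ∩ USetCfg A input D 𝒜 α O true = ∅ ∧
  (run A input D α).oval O ∈ USetCfg A input D 𝒜 α O v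

/-- The configuration `Dα` is `n`-recording. -/
def NRecordingCfg (A : Algorithm n) (input : Fin n → Bool) (D : Config A)
    (𝒜 : Set (List (Event n))) (α : List (Event n)) (O : A.ObjIdx) : Prop :=
  USetCfg A input D 𝒜 α O false ∩ USetCfg A input D 𝒜 α O true = ∅ ∧
  ∀ v : Bool, (run A input D α).oval O ∈ USetCfg A input D 𝒜 α O v →
    ∃! j : Fin n, OnTeam A input D 𝒜 α j (!v)

/-- Apply the operations `o i` of the processes listed in `σ`, in order, to an object of type
`T`, starting from the value `u`. -/
def applyOps (T : DetType) (o : Fin n → T.Op) : T.Value → List (Fin n) → T.Value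
  | u, [] => u
  | u, i :: σ => applyOps T o (T.δ u (o i)).2 σ

/-- `U_x`: the set of values obtainable by applying the operations of the processes of a
duplicate-free schedule whose first process is on team `x` to an object with initial value
`u`. -/
def UVals (T : DetType) (o : Fin n → T.Op) (u : T.Value) (team : Fin n → Bool) (x : Bool) :
    Set T.Value :=
  { v | ∃ (i : Fin n) (σ : List (Fin n)), team i = x ∧ (i :: σ).Nodup ∧
        v = applyOps T o u (i :: σ) }

/-- A deterministic type `T` is `n`-recording. -/
def NRecording (n : ℕ) (T : DetType) : Prop :=
  ∃ (u : T.Value) (team : Fin n → Bool) (o : Fin n → T.Op),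
    (∀ x : Bool, ∃ i, team i = x) ∧
    (UVals T o u team false ∩ UVals T o u team true = ∅) ∧
    (∀ x : Bool, u ∈ UVals T o u team x → ∃! i, team i = !x)

end RecoverableConsensus

namespace RecoverableConsensus

section CrashBound

variable {n z : ℕ} {σ τ : List (Event n)}

lemma EMem.perm (hσ : EMem z σ) (h : σ.Perm τ) : EMem z τ := by
  intro i
  rw [crashCount, stepsBelow, ← (h.filter _).length_eq, ← (h.filter _).length_eq]
  exact hσ i

lemma EMem.concat_step (hσ : EMem z σ) (j : Fin n) : EMem z (σ ++ [.step j]) := by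
  intro i
  have hcrash : crashCount i (σ ++ [.step j]) = crashCount i σ := by simp [crashCount]
  have hsteps : stepsBelow i σ ≤ stepsBelow i (σ ++ [.step j]) := by simp [stepsBelow]
  rw [hcrash]
  exact (hσ i).trans (Nat.mul_le_mul_left _ hsteps)

lemma concat_mem_eStarSet_iff {e : Event n} :
    σ ++ [e] ∈ EStarSet n z ↔ σ ∈ EStarSet n z ∧ EMem z (σ ++ [e]) := by
  simp only [EStarSet, Set.mem_ofPred_eq, List.prefix_concat_iff, forall_eq_or_imp, and_comm]

/-- The closure properties of a set `𝒜` of executions under which the team argument works: `𝒜`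
contains the prefixes of its members, steps are never forbidden, and a final crash may be postponed
until after a step of another process. -/
structure IsAdmissible (𝒜 : Set (List (Event n))) : Prop where
  prefix_mem : ∀ {σ τ}, τ ∈ 𝒜 → σ <+: τ → σ ∈ 𝒜
  step_mem : ∀ {σ} (j : Fin n), σ ∈ 𝒜 → σ ++ [.step j] ∈ 𝒜
  delay_crash : ∀ {σ} {i j : Fin n}, i ≠ j →
    σ ++ [.crash i] ++ [.step j] ∈ 𝒜 → σ ++ [.step j] ++ [.crash i] ∈ 𝒜

lemma IsAdmissible.append_replicate_step_mem {𝒜 : Set (List (Event n))} (h𝒜 : IsAdmissible 𝒜)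
    (hσ : σ ∈ 𝒜) (i : Fin n) (k : ℕ) : σ ++ List.replicate k (.step i) ∈ 𝒜 := by
  induction k with
  | zero => simpa using hσ
  | succ k ih =>
    rw [List.replicate_succ', ← List.append_assoc]
    exact h𝒜.step_mem i ih

lemma isAdmissible_eStarSet (n z : ℕ) : IsAdmissible (EStarSet n z) where
  prefix_mem hτ h _ hρ := hτ _ (hρ.trans h)
  step_mem j hσ := concat_mem_eStarSet_iff.2 ⟨hσ, (hσ _ List.prefix_rfl).concat_step j⟩
  delay_crash {σ i j} _ h := by
    obtain ⟨hcrash, hbound⟩ := concat_mem_eStarSet_iff.1 h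
    have hσ : σ ∈ EStarSet n z := (concat_mem_eStarSet_iff.1 hcrash).1
    have hperm : (σ ++ [Event.crash i] ++ [Event.step j]).Perm
        (σ ++ [Event.step j] ++ [Event.crash i]) := by
      simpa using (List.Perm.swap _ _ _).append_left σ
    exact concat_mem_eStarSet_iff.2
      ⟨concat_mem_eStarSet_iff.2 ⟨hσ, (hσ _ List.prefix_rfl).concat_step j⟩, hbound.perm hperm⟩

end CrashBound

section Dynamics

variable {n : ℕ} {A : Algorithm n} {input : Fin n → Bool}

lemma run_append (C : Config A) (σ τ : List (Event n)) :
    run A input C (σ ++ τ) = run A input (run A input C σ) τ := by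
  induction σ generalizing C with
  | nil => rfl
  | cons e _ ih => exact ih _

lemma applyEvent_crash_step_comm (C : Config A) {i j : Fin n} (hij : i ≠ j) :
    applyEvent A input (applyEvent A input C (.crash i)) (.step j) =
      applyEvent A input (applyEvent A input C (.step j)) (.crash i) := by
  have hj : Function.update C.pstate i (A.init i (input i)) j = C.pstate j :=
    Function.update_of_ne hij.symm _ _
  simp only [applyEvent, hj]
  rcases A.pending j (C.pstate j) with _ | ⟨o, op⟩
  · rfl
  · simp only [Function.update_comm hij]

lemma run_crash_step_comm (C : Config A) (σ : List (Event n)) {i j : Fin n} (hij : i ≠ j) :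
    run A input C (σ ++ [.crash i] ++ [.step j]) =
      run A input C (σ ++ [.step j] ++ [.crash i]) := by
  simp only [run_append]
  exact applyEvent_crash_step_comm _ hij

lemma run_concat_crash_pstate (C : Config A) (σ : List (Event n)) (i : Fin n) :
    (run A input C (σ ++ [.crash i])).pstate i = A.init i (input i) := by
  simp [run_append, run, applyEvent]

lemma RecWaitFree.exists_solo_decision (hA : RecWaitFree A) (C : Config A) {i : Fin n}
    (hi : C.pstate i = A.init i (input i)) :
    ∃ k v, A.output i ((run A input C (List.replicate k (.step i))).pstate i) = some v := by
  simpa [initSeg] using hA input C (fun _ => .step i) i (.inl hi) (fun m => ⟨m, le_rfl, rfl⟩)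
    ⟨0, fun _ _ => nofun⟩

lemma HasDecided.append {C : Config A} {σ : List (Event n)} {i : Fin n} {v : Bool}
    (h : HasDecided A input C σ i v) (τ : List (Event n)) :
    HasDecided A input C (σ ++ τ) i v := by
  obtain ⟨ρ, hρ, hout⟩ := h
  exact ⟨ρ, hρ.trans (List.prefix_append σ τ), hout⟩

end Dynamics

section Valency

variable {n : ℕ} {A : Algorithm n} {input : Fin n → Bool} {C : Config A}
  {𝒜 : Set (List (Event n))} {α β σ τ : List (Event n)} {v w : Bool}

/-- The value `v` is reachable after `α` within `𝒜`: some extension of `α` in `𝒜` decides `v`.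
An execution is bivalent exactly when both values are reachable after it. -/
def CanDecide (A : Algorithm n) (input : Fin n → Bool) (C : Config A) (𝒜 : Set (List (Event n)))
    (α : List (Event n)) (v : Bool) : Prop :=
  ∃ β, α ++ β ∈ 𝒜 ∧ ∃ i, HasDecided A input C (α ++ β) i v

lemma eventBy_univ (e : Event n) : eventBy Set.univ e := by
  cases e <;> trivial

lemma BivalentIn.canDecide {P : Set (Fin n)} (h : BivalentIn A input C 𝒜 P α) (v : Bool) :
    CanDecide A input C 𝒜 α v := by
  obtain ⟨β, -, hβ, hdec⟩ := h v
  exact ⟨β, hβ, hdec⟩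

lemma VUnivalentIn.eq_of_canDecide (h : VUnivalentIn A input C 𝒜 Set.univ α v)
    (hw : CanDecide A input C 𝒜 α w) : w = v := by
  obtain ⟨β, hβ, i, hdec⟩ := hw
  exact h.2 β (fun e _ => eventBy_univ e) hβ i w hdec

lemma UnivalentIn.vUnivalentIn_of_canDecide (h : UnivalentIn A input C 𝒜 Set.univ α)
    (hv : CanDecide A input C 𝒜 α v) : VUnivalentIn A input C 𝒜 Set.univ α v := by
  obtain ⟨w, hw⟩ := h
  rwa [hw.eq_of_canDecide hv]

lemma CanDecide.of_append (h : CanDecide A input C 𝒜 (α ++ β) v) :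
    CanDecide A input C 𝒜 α v := by
  obtain ⟨γ, hγ⟩ := h
  exact ⟨β ++ γ, by simpa only [List.append_assoc] using hγ⟩

lemma CanDecide.mem (h : CanDecide A input C 𝒜 α v) (h𝒜 : IsAdmissible 𝒜) : α ∈ 𝒜 := by
  obtain ⟨β, hβ, -⟩ := h
  exact h𝒜.prefix_mem hβ (List.prefix_append α β)

lemma CanDecide.exists_concat (h : CanDecide A input C 𝒜 α v) (h𝒜 : IsAdmissible 𝒜) :
    ∃ e, CanDecide A input C 𝒜 (α ++ [e]) v := by
  obtain ⟨_ | ⟨e, β⟩, hβ, i, hdec⟩ := h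
  · rw [List.append_nil] at hβ hdec
    exact ⟨.step i, [], by simpa using h𝒜.step_mem i hβ, i, by simpa using hdec.append [.step i]⟩
  · exact ⟨e, β, by simpa using hβ, i, by simpa using hdec⟩

lemma CanDecide.of_output {i : Fin n} (hmem : α ++ β ∈ 𝒜)
    (hout : A.output i ((run A input (run A input C α) β).pstate i) = some v) :
    CanDecide A input C 𝒜 α v :=
  ⟨β, hmem, i, α ++ β, List.prefix_rfl, by rwa [run_append]⟩

lemma RecWaitFree.exists_common_canDecide (hA : RecWaitFree A) (h𝒜 : IsAdmissible 𝒜)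
    (hσ : σ ∈ 𝒜) (hτ : τ ∈ 𝒜) (hrun : run A input C σ = run A input C τ) {i : Fin n}
    (hi : (run A input C σ).pstate i = A.init i (input i)) :
    ∃ w, CanDecide A input C 𝒜 σ w ∧ CanDecide A input C 𝒜 τ w := by
  obtain ⟨k, w, hw⟩ := hA.exists_solo_decision (run A input C σ) hi
  exact ⟨w, .of_output (h𝒜.append_replicate_step_mem hσ i k) hw,
    .of_output (h𝒜.append_replicate_step_mem hτ i k) (hrun ▸ hw)⟩

lemma VUnivalentIn.canDecide_concat_step {i j : Fin n}
    (h : VUnivalentIn A input C 𝒜 Set.univ (α ++ [.crash i]) v) (hA : RecWaitFree A)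
    (h𝒜 : IsAdmissible 𝒜) (hij : i ≠ j) : CanDecide A input C 𝒜 (α ++ [.step j]) v := by
  have hmem : α ++ [.crash i] ++ [.step j] ∈ 𝒜 := h𝒜.step_mem j h.1
  have hinit : (run A input C (α ++ [.step j] ++ [.crash i])).pstate i = A.init i (input i) :=
    run_concat_crash_pstate C _ i
  obtain ⟨w, hstep, hcrash⟩ := hA.exists_common_canDecide h𝒜 (h𝒜.delay_crash hij hmem) hmem
    (run_crash_step_comm C α hij).symm hinit
  obtain rfl : w = v := h.eq_of_canDecide hcrash.of_append
  exact hstep.of_append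

end Valency

end RecoverableConsensus

open RecoverableConsensus in
theorem exists_process_on_each_team_general {n : ℕ} (hn : 2 ≤ n) {A : Algorithm n}
    (hA : RecWaitFree A) {input : Fin n → Bool} {C : Config A} {𝒜 : Set (List (Event n))}
    (h𝒜 : IsAdmissible 𝒜) {α : List (Event n)} (hcrit : Critical A input C 𝒜 α) (v : Bool) :
    ∃ i : Fin n, OnTeam A input C 𝒜 α i v := by
  obtain ⟨hα, hbiv, huniv⟩ := hcrit
  suffices ∃ i, CanDecide A input C 𝒜 (α ++ [.step i]) v by
    obtain ⟨i, hi⟩ := this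
    exact ⟨i, (huniv _ (List.cons_ne_nil _ _) (h𝒜.step_mem i hα)).vUnivalentIn_of_canDecide hi⟩
  obtain ⟨i | i, hi⟩ := (hbiv.canDecide v).exists_concat h𝒜
  · exact ⟨i, hi⟩
  · have hcrash : VUnivalentIn A input C 𝒜 Set.univ (α ++ [.crash i]) v :=
      (huniv _ (List.cons_ne_nil _ _) (hi.mem h𝒜)).vUnivalentIn_of_canDecide hi
    have : Nontrivial (Fin n) := Fin.nontrivial_iff_two_le.2 hn
    obtain ⟨j, hji⟩ := exists_ne i
    exact ⟨j, hcrash.canDecide_concat_step hA h𝒜 hji.symm⟩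

open RecoverableConsensus in
/-- In the critical-execution setting, there is at least one process on
team 0 in `Cα` and at least one process on team 1 in `Cα`. -/
theorem exists_process_on_each_team
    (n : ℕ) (hn : 2 ≤ n) (A : Algorithm n) (hA : SolvesRecConsensus A)
    (input : Fin n → Bool) (C : Config A) (z : ℕ) (hz : 1 ≤ z)
    (α : List (Event n)) (hα : α ∈ EStarSet n z)
    (hcrit : Critical A input C (EStarSet n z) α) :
    (∃ i : Fin n, OnTeam A input C (EStarSet n z) α i false) ∧
    (∃ j : Fin n, OnTeam A input C (EStarSet n z) α j true) := by
  have h := exists_process_on_each_team_general hn hA.2.2 (isAdmissible_eStarSet n z) hcrit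
  exact ⟨h false, h true⟩
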